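/- arXiv:1304.3741 — 2 statements merged into one kernel-verified Lean document; each statement's English description precedes it below -/
import Mathlib

section
/- For p < 1/2, the density g(x) = (x−1)^{2x−1} e^{−(1/p + 2 ln p)x + 1/p} / (x Γ(2x)) integrates to 1 over (1, ∞): ∫₁^∞ g(x) dx = 1. -/
open Real MeasureTheory

/-- The cascade-size density of the Gamma(2,p) continuous-state branching process. -/
noncomputable def cascadeDensity (p x : ℝ) : ℝ :=
  (x - 1) ^ (2 * x - 1) * Real.exp (-(1 / p + 2 * Real.log p) * x + 1 / p)
    / (x * Real.Gamma (2 * x))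

/-!
Put `s = 1 / p > 2`, `θ = s - 2 log s` and `h(x) = (x-1)^(2x-1) / (x Γ(2x))`. The claim says that
the Laplace transform of `h` at `θ` is `exp (-s)`, i.e. that `h` is the inverse Laplace transform
of `θ ↦ exp (-s(θ))`, where `s(θ)` is the larger root of `z - 2 log z = θ`.

Bromwich's formula `y^(k-1) / Γ(k) = (2πi)⁻¹ ∫ exp(zy) z^(-k) dz` (`integral_bromwich`), used at
`k = 2x` and `k = 2x + 1` with `y = x - 1`, gives
`h(x) = (2πi)⁻¹ ∫ (1 - 2/z) exp(-z) exp(x (z - 2 log z)) dz` over the line `Re z = c`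
(`integral_kernelE_line`). For `2 < c < s` the real part of `q(z) = z - 2 log z - θ` is negative
on the line, so Fubini applies (`integrable_kernelE`), and integrating over `x > 1` leaves
`-exp(-θ) (2πi)⁻¹ ∫ z⁻² q'(z) / q(z) dz`. On `Re z > 2` the function `q` vanishes only at `s`
(`norm_qExp_ge`), where `q' / q` has residue `1`; moving the line to `+∞` yields
`exp(-θ) s⁻² = exp(-s)` (`integral_gFun`). The residue is extracted by subtracting an explicit
kernel with the same pole, whose line integral is that of `1 / (d² + t²)`; the difference is
holomorphic and `O(|z|⁻²)`, so its line integral vanishes (`integral_line_eq_zero`).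
-/

/-! ### Vertical lines and Bromwich's formula -/

/-- The point of height `t` on the vertical line `Re z = c`. -/
noncomputable def linePt (c t : ℝ) : ℂ := (c : ℂ) + (t : ℂ) * Complex.I

lemma linePt_re (c t : ℝ) : (linePt c t).re = c := by simp [linePt]

lemma linePt_im (c t : ℝ) : (linePt c t).im = t := by simp [linePt]

lemma continuous_linePt (c : ℝ) : Continuous (linePt c) := by
  unfold linePt; fun_prop

lemma linePt_mem_slitPlane {c : ℝ} (hc : 0 < c) (t : ℝ) : linePt c t ∈ Complex.slitPlane :=
  Or.inl (by rwa [linePt_re])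

lemma linePt_ne_zero {c : ℝ} (hc : 0 < c) (t : ℝ) : linePt c t ≠ 0 :=
  Complex.slitPlane_ne_zero (linePt_mem_slitPlane hc t)

lemma norm_linePt_sq (c t : ℝ) : ‖linePt c t‖ ^ 2 = c ^ 2 + t ^ 2 := by
  rw [Complex.sq_norm, Complex.normSq_apply, linePt_re, linePt_im]; ring

lemma le_norm_linePt (c t : ℝ) : c ≤ ‖linePt c t‖ := by
  have := Complex.re_le_norm (linePt c t)
  rwa [linePt_re] at this

lemma continuous_log_linePt {c : ℝ} (hc : 0 < c) :
    Continuous fun t => Complex.log (linePt c t) :=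
  (continuous_linePt c).clog (linePt_mem_slitPlane hc)

lemma integrable_inv_sq_add_sq {c : ℝ} (hc : 0 < c) :
    Integrable fun t : ℝ => (c ^ 2 + t ^ 2)⁻¹ := by
  have h := (integrable_inv_one_add_sq.comp_mul_left' (inv_ne_zero hc.ne')).const_mul (c ^ 2)⁻¹
  refine h.congr (Filter.Eventually.of_forall fun t => ?_)
  simp only
  rw [← mul_inv]
  congr 1
  field_simp

lemma integral_univ_inv_sq_add_sq {c : ℝ} (hc : 0 < c) :
    ∫ t : ℝ, (c ^ 2 + t ^ 2)⁻¹ = π / c := by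
  have h : (fun t : ℝ => (c ^ 2 + t ^ 2)⁻¹)
      = fun t => (c ^ 2)⁻¹ * (fun u : ℝ => (1 + u ^ 2)⁻¹) (c⁻¹ * t) := by
    ext t
    simp only
    rw [← mul_inv]
    congr 1
    field_simp
  rw [h, integral_const_mul, Measure.integral_comp_mul_left (fun u : ℝ => (1 + u ^ 2)⁻¹),
    integral_univ_inv_one_add_sq, inv_inv, abs_of_pos hc, smul_eq_mul]
  field_simp

lemma norm_exp_mul_log {z : ℂ} (hz : z ≠ 0) (k : ℝ) :
    ‖Complex.exp (-(k : ℂ) * Complex.log z)‖ = ‖z‖ ^ (-k) := by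
  rw [Complex.norm_exp, ← Complex.ofReal_neg, Complex.re_ofReal_mul, Complex.log_re,
    Real.rpow_def_of_pos (norm_pos_iff.2 hz), mul_comm]

lemma rpow_neg_le {a b k : ℝ} (ha : 0 < a) (hab : a ≤ b) (hk : 2 ≤ k) :
    b ^ (-k) ≤ a ^ (2 - k) * (b ^ 2)⁻¹ := by
  have hb := ha.trans_le hab
  have : b ^ (-k) = b ^ (2 - k) * (b ^ 2)⁻¹ := by
    rw [← Real.rpow_natCast, ← Real.rpow_neg hb.le, ← Real.rpow_add hb]
    congr 1; push_cast; ring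
  rw [this]
  exact mul_le_mul_of_nonneg_right (Real.rpow_le_rpow_of_nonpos ha hab (by linarith))
    (by positivity)

lemma integrable_exp_log_linePt {c k : ℝ} (hc : 0 < c) (hk : 2 ≤ k) :
    Integrable fun t : ℝ => Complex.exp (-(k : ℂ) * Complex.log (linePt c t)) := by
  refine ((integrable_inv_sq_add_sq hc).const_mul (c ^ (2 - k))).mono'
    (Continuous.aestronglyMeasurable ?_) (Filter.Eventually.of_forall fun t => ?_)
  · have := continuous_log_linePt hc
    fun_prop
  · rw [norm_exp_mul_log (linePt_ne_zero hc t), ← norm_linePt_sq]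
    exact rpow_neg_le hc (le_norm_linePt c t) hk

lemma integrable_bromwich {c k : ℝ} (hc : 0 < c) (hk : 2 ≤ k) (y : ℝ) :
    Integrable fun t : ℝ => Complex.exp (y * linePt c t) *
      Complex.exp (-(k : ℂ) * Complex.log (linePt c t)) := by
  refine (integrable_exp_log_linePt hc hk).bdd_mul (c := Real.exp (y * c))
    (Continuous.aestronglyMeasurable ?_) (Filter.Eventually.of_forall fun t => ?_)
  · have := continuous_linePt c
    fun_prop
  · rw [Complex.norm_exp, Complex.re_ofReal_mul, linePt_re]

lemma integrableOn_rpow_mul_exp {k c : ℝ} (hk : 0 < k) (hc : 0 < c) :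
    IntegrableOn (fun u : ℝ => u ^ (k - 1) * Real.exp (-(c * u))) (Set.Ioi 0) :=
  integrableOn_rpow_mul_exp_neg_mul_rpow (p := 1) (s := k - 1) (by linarith) one_pos hc
    |>.congr_fun (fun u _ => by simp) measurableSet_Ioi

/-- The Laplace transform of `u ^ (k - 1)` at a complex point of the right half-plane: both sides
are holomorphic there, and they agree on the positive real axis. -/
lemma integral_rpow_mul_cexp {k : ℝ} (hk : 0 < k) {z : ℂ} (hz : 0 < z.re) :
    ∫ u in Set.Ioi (0 : ℝ), ((u ^ (k - 1) : ℝ) : ℂ) * Complex.exp (-(z * u))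
      = (Real.Gamma k : ℂ) * Complex.exp (-(k : ℂ) * Complex.log z) := by
  set U : Set ℂ := {z | 0 < z.re} with hU
  have hUo : IsOpen U := isOpen_lt continuous_const Complex.continuous_re
  set L : ℂ → ℂ := fun z => ∫ u in Set.Ioi (0 : ℝ),
    ((u ^ (k - 1) : ℝ) : ℂ) * Complex.exp (-(z * u)) with hL
  set M : ℂ → ℂ := fun z => (Real.Gamma k : ℂ) * Complex.exp (-(k : ℂ) * Complex.log z) with hM
  have hmeas : ∀ w : ℂ, AEStronglyMeasurable
      (fun u : ℝ => ((u ^ (k - 1) : ℝ) : ℂ) * Complex.exp (-(w * u)))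
      (volume.restrict (Set.Ioi 0)) := fun w => Measurable.aestronglyMeasurable (by fun_prop)
  have hnorm : ∀ (w : ℂ) (u : ℝ), ‖Complex.exp (-(w * u))‖ = Real.exp (-(w.re * u)) := by
    intro w u
    rw [Complex.norm_exp, Complex.neg_re, mul_comm, Complex.re_ofReal_mul, mul_comm]
  have hLd : DifferentiableOn ℂ L U := by
    intro w hw
    have hw : 0 < w.re := hw
    refine DifferentiableAt.differentiableWithinAt (HasDerivAt.differentiableAt
      (hasDerivAt_integral_of_dominated_loc_of_deriv_le
      (F := fun (z : ℂ) (u : ℝ) => ((u ^ (k - 1) : ℝ) : ℂ) * Complex.exp (-(z * u)))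
      (F' := fun (z : ℂ) (u : ℝ) =>
        ((u ^ (k - 1) : ℝ) : ℂ) * (Complex.exp (-(z * u)) * (-u)))
      (bound := fun u : ℝ => u ^ (k + 1 - 1) * Real.exp (-(w.re / 2 * u)))
      (s := {z | w.re / 2 < z.re}) ?_ ?_ ?_ ?_ ?_ ?_ ?_).2)
    · exact (isOpen_lt continuous_const Complex.continuous_re).mem_nhds
        (by simpa using hw)
    · exact Filter.Eventually.of_forall hmeas
    · refine (integrableOn_rpow_mul_exp hk hw).mono' (hmeas w) ?_
      refine (ae_restrict_iff' measurableSet_Ioi).2 (Filter.Eventually.of_forall fun u hu => ?_)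
      rw [norm_mul, hnorm, Complex.norm_real, Real.norm_of_nonneg (Real.rpow_nonneg (le_of_lt hu) _)]
    · exact Measurable.aestronglyMeasurable (by fun_prop)
    · refine (ae_restrict_iff' measurableSet_Ioi).2 (Filter.Eventually.of_forall fun u hu => ?_)
      intro z hz
      have hu : 0 < u := hu
      have hz : w.re / 2 < z.re := hz
      rw [norm_mul, norm_mul, hnorm, norm_neg, Complex.norm_real, Complex.norm_real,
        Real.norm_of_nonneg (Real.rpow_nonneg hu.le _), Real.norm_of_nonneg hu.le,
        show k + 1 - 1 = (k - 1) + 1 by ring, Real.rpow_add_one hu.ne', mul_assoc,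
        mul_comm (Real.exp _) u]
      gcongr
    · exact integrableOn_rpow_mul_exp (by linarith) (by linarith)
    · refine Filter.Eventually.of_forall fun u z _ => ?_
      have := (((hasDerivAt_id z).mul_const (u : ℂ)).neg.cexp).const_mul ((u ^ (k - 1) : ℝ) : ℂ)
      rw [one_mul] at this
      exact this
  have hMd : DifferentiableOn ℂ M U := by
    intro w hw
    have : DifferentiableAt ℂ Complex.log w := (Complex.hasDerivAt_log (Or.inl hw)).differentiableAt
    exact ((this.const_mul _).cexp.const_mul _).differentiableWithinAt
  have hreal : ∀ x : ℝ, 0 < x → L x = M x := by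
    intro x hx
    have h := Real.integral_rpow_mul_exp_neg_mul_Ioi hk hx
    simp only [hL, hM]
    rw [← Complex.ofReal_log hx.le]
    have h2 : Complex.exp (-(k : ℂ) * (Real.log x : ℂ)) = (((1 / x) ^ k : ℝ) : ℂ) := by
      rw [Real.rpow_def_of_pos (by positivity), one_div, Real.log_inv]
      push_cast
      congr 1; ring
    rw [h2, mul_comm, ← Complex.ofReal_mul, ← h, ← integral_complex_ofReal]
    refine setIntegral_congr_fun measurableSet_Ioi fun u _ => ?_
    push_cast; rfl
  refine (hLd.analyticOnNhd hUo).eqOn_of_preconnected_of_frequently_eq (hMd.analyticOnNhd hUo)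
    (z₀ := ((1 : ℝ) : ℂ)) (convex_halfSpace_re_gt 0).isPreconnected (by simp [hU]) ?_ hz
  have ht : Filter.Tendsto (fun x : ℝ => (x : ℂ)) (nhdsWithin 1 {1}ᶜ)
      (nhdsWithin ((1 : ℝ) : ℂ) {((1 : ℝ) : ℂ)}ᶜ) := by
    refine tendsto_nhdsWithin_iff.2
      ⟨(Complex.continuous_ofReal.tendsto 1).mono_left nhdsWithin_le_nhds, ?_⟩
    filter_upwards [self_mem_nhdsWithin] with x hx h
    exact hx (Complex.ofReal_injective h)
  refine ht.frequently (Filter.Eventually.frequently ?_)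
  filter_upwards [nhdsWithin_le_nhds (lt_mem_nhds one_pos)] with x hx
  exact hreal x hx

/-- Bromwich's formula for the inverse Laplace transform of `z ^ (-k)`. It is Fourier inversion
for the function `u ↦ u₊ ^ (k - 1) * exp (-c * u)`, continuous because `k > 1`, whose Fourier
transform is `Γ(k) * z ^ (-k)` along the line `Re z = c`. -/
lemma integral_bromwich {c k y : ℝ} (hc : 0 < c) (hk : 2 ≤ k) (hy : 0 < y) :
    ∫ t : ℝ, Complex.exp (y * linePt c t) *
      Complex.exp (-(k : ℂ) * Complex.log (linePt c t))
      = ((2 * π * (y ^ (k - 1) / Real.Gamma k) : ℝ) : ℂ) := by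
  set f : ℝ → ℂ := fun u => (((max u 0) ^ (k - 1) * Real.exp (-(c * u)) : ℝ) : ℂ) with hf
  have hΓ : Real.Gamma k ≠ 0 := (Real.Gamma_pos_of_pos (by linarith)).ne'
  have hfc : Continuous f := by
    have : Continuous fun u : ℝ => (max u 0) ^ (k - 1) :=
      (continuous_id.max continuous_const).rpow_const fun _ => Or.inr (by linarith)
    fun_prop
  have hf0 : ∀ u ∉ Set.Ioi (0 : ℝ), f u = 0 := by
    intro u hu
    have : max u 0 = 0 := max_eq_right (not_lt.1 hu)
    simp only [hf, this]
    rw [Real.zero_rpow (by linarith)]; simp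
  have hfi : Integrable f := by
    rw [← integrableOn_iff_integrable_of_support_subset (s := Set.Ioi 0)]
    · have h1 := integrableOn_rpow_mul_exp (k := k) (by linarith) hc
      refine IntegrableOn.congr_fun (h1.ofReal (𝕜 := ℂ)) (fun u hu => ?_) measurableSet_Ioi
      simp only [hf, max_eq_left (le_of_lt (Set.mem_Ioi.1 hu))]
      rfl
    · intro u hu
      by_contra h
      exact hu (hf0 u h)
  have hft : FourierTransform.fourier f = fun w : ℝ => (Real.Gamma k : ℂ) *
      Complex.exp (-(k : ℂ) * Complex.log (linePt c (2 * π * w))) := by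
    ext w
    rw [Real.fourier_real_eq_integral_exp_smul, ← setIntegral_eq_integral_of_forall_compl_eq_zero
      (s := Set.Ioi 0) (fun u hu => by rw [hf0 u hu, smul_zero])]
    rw [← integral_rpow_mul_cexp (by linarith) (by rwa [linePt_re])]
    refine setIntegral_congr_fun measurableSet_Ioi fun u hu => ?_
    simp only [hf, max_eq_left (le_of_lt (Set.mem_Ioi.1 hu)), smul_eq_mul]
    rw [Complex.ofReal_mul (u ^ (k - 1)), mul_left_comm, Complex.ofReal_exp, ← Complex.exp_add]
    congr 2
    simp only [linePt]; push_cast; ring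
  have hfti : Integrable (FourierTransform.fourier f) := by
    rw [hft]
    exact ((integrable_exp_log_linePt hc hk).comp_mul_left' (by positivity)).const_mul _
  have hinv := congrFun (hfc.fourierInv_fourier_eq hfi hfti) y
  rw [Real.fourierInv_eq', hft] at hinv
  have hsub := Measure.integral_comp_mul_left (fun t : ℝ => Complex.exp (y * linePt c t) *
      Complex.exp (-(k : ℂ) * Complex.log (linePt c t))) (2 * π)
  have hfy : f y = ((y ^ (k - 1) * Real.exp (-(c * y)) : ℝ) : ℂ) := by
    simp only [hf, max_eq_left hy.le]
  have key : ∫ w : ℝ, Complex.exp (y * linePt c (2 * π * w)) *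
      Complex.exp (-(k : ℂ) * Complex.log (linePt c (2 * π * w)))
      = ((y ^ (k - 1) / Real.Gamma k : ℝ) : ℂ) := by
    have : ∀ w : ℝ, Complex.exp (y * linePt c (2 * π * w)) *
        Complex.exp (-(k : ℂ) * Complex.log (linePt c (2 * π * w)))
        = ((Real.exp (c * y) / Real.Gamma k : ℝ) : ℂ) *
          (Complex.exp (↑(2 * π * inner ℝ w y) * Complex.I) • ((Real.Gamma k : ℂ) *
            Complex.exp (-(k : ℂ) * Complex.log (linePt c (2 * π * w))))) := by
      intro w
      have h1 : Complex.exp (y * linePt c (2 * π * w)) = (Real.exp (c * y) : ℂ) *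
          Complex.exp (↑(2 * π * inner ℝ w y) * Complex.I) := by
        rw [Complex.ofReal_exp, ← Complex.exp_add]
        congr 1
        simp [linePt]; ring
      have hΓ' : (Real.Gamma k : ℂ) ≠ 0 := by exact_mod_cast hΓ
      rw [h1, smul_eq_mul, Complex.ofReal_div]
      field_simp
    simp_rw [this]
    rw [integral_const_mul, hinv, hfy, ← Complex.ofReal_mul]
    congr 1
    have : Real.exp (c * y) * Real.exp (-(c * y)) = 1 := by rw [← Real.exp_add]; simp
    calc _ = (Real.exp (c * y) * Real.exp (-(c * y))) * (y ^ (k-1) / Real.Gamma k) := by ring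
      _ = _ := by rw [this, one_mul]
  rw [key, abs_of_pos (by positivity)] at hsub
  rw [Complex.ofReal_mul, hsub, Complex.real_smul, ← mul_assoc, ← Complex.ofReal_mul,
    mul_inv_cancel₀ (by positivity), Complex.ofReal_one, one_mul]

/-! ### The residue at `s` -/

/-- The exponent `z - 2 log z - θ` with `θ = s - 2 log s`; it vanishes at `z = s`. -/
noncomputable def qExp (s : ℝ) (z : ℂ) : ℂ :=
  z - 2 * Complex.log z - ((s - 2 * Real.log s : ℝ) : ℂ)

/-- `2 log` is `2 / a`-Lipschitz on `Re z ≥ a`, so for `a > 2` the exponent has no zero there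
other than `s`. -/
lemma norm_qExp_ge {s a : ℝ} {z : ℂ} (ha : 0 < a) (hs : a ≤ s) (hz : a ≤ z.re) :
    (1 - 2 / a) * ‖z - s‖ ≤ ‖qExp s z‖ := by
  have hlog : ‖Complex.log z - Complex.log s‖ ≤ a⁻¹ * ‖z - s‖ := by
    refine Convex.norm_image_sub_le_of_norm_hasDerivWithin_le (s := {w : ℂ | a ≤ w.re})
      (f' := fun w => w⁻¹) (fun w hw => ?_) (fun w hw => ?_) (convex_halfSpace_re_ge a)
      (by simpa using hs) hz
    · exact (Complex.hasDerivAt_log (Or.inl (ha.trans_le hw))).hasDerivWithinAt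
    · rw [norm_inv]
      exact inv_anti₀ ha (le_trans hw (Complex.re_le_norm w))
  have hq : qExp s z = (z - s) - 2 * (Complex.log z - Complex.log s) := by
    simp only [qExp]
    push_cast
    rw [Complex.ofReal_log (ha.trans_le hs).le]
    ring
  have h2 : ‖(2 : ℂ) * (Complex.log z - Complex.log s)‖ ≤ 2 / a * ‖z - s‖ := by
    rw [norm_mul, Complex.norm_ofNat, div_eq_mul_inv, mul_assoc]
    gcongr
  rw [hq]
  have := norm_sub_norm_le (z - s) (2 * (Complex.log z - Complex.log s))
  linarith

lemma qExp_self {s : ℝ} (hs : 0 < s) : qExp s s = 0 := by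
  simp only [qExp]
  push_cast
  rw [Complex.ofReal_log hs.le]; ring

lemma hasDerivAt_qExp {s : ℝ} {z : ℂ} (hz : 0 < z.re) :
    HasDerivAt (qExp s) (1 - 2 / z) z := by
  rw [div_eq_mul_inv]
  exact ((hasDerivAt_id z).sub ((Complex.hasDerivAt_log (Or.inl hz)).const_mul 2)).sub_const
    ((s - 2 * Real.log s : ℝ) : ℂ)

/-- Cauchy's theorem on the half-plane `Re z > 2` for a function that is `O(|z|⁻²)`: apply the
rectangle version to `[c, c + T] × [-T, T]` and let `T → ∞`. -/
lemma integral_line_eq_zero {D : ℂ → ℂ} {c C R : ℝ} (hc : 2 < c)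
    (hD : DifferentiableOn ℂ D {z | 2 < z.re})
    (hb : ∀ z : ℂ, c ≤ z.re → R ≤ ‖z‖ → ‖D z‖ ≤ C / ‖z‖ ^ 2)
    (hi : Integrable fun t => D (linePt c t)) :
    ∫ t, D (linePt c t) = 0 := by
  have hlim := intervalIntegral_tendsto_integral hi Filter.tendsto_neg_atTop_atBot
    Filter.tendsto_id
  refine tendsto_nhds_unique hlim ?_
  have hzero : Filter.Tendsto (fun T : ℝ => 4 * |C| / T) Filter.atTop (nhds 0) :=
    tendsto_const_nhds.div_atTop Filter.tendsto_id
  refine squeeze_zero_norm' ?_ hzero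
  filter_upwards [Filter.eventually_ge_atTop R, Filter.eventually_gt_atTop 0] with T hTR hT
  have hrect := Complex.integral_boundary_rect_eq_zero_of_differentiableOn D
    (linePt c (-T)) (linePt (c + T) T) (hD.mono (by
      intro z hz
      have := hz.1
      simp only [Set.mem_preimage, linePt_re, Set.uIcc_of_le (show c ≤ c + T by linarith)] at this
      exact hc.trans_le this.1))
  simp only [linePt_re, linePt_im] at hrect
  have hpt : ∀ z : ℂ, c ≤ z.re → T ≤ ‖z‖ → ‖D z‖ ≤ |C| / T ^ 2 := by
    intro z hz hTz
    refine (hb z hz (hTR.trans hTz)).trans ?_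
    have : C ≤ |C| := le_abs_self C
    gcongr
  have hor : ∀ b : ℝ, |b| = T →
      ‖∫ x : ℝ in c..(c + T), D (x + b * Complex.I)‖ ≤ |C| / T := by
    intro b hbT
    have := intervalIntegral.norm_integral_le_of_norm_le_const (a := c) (b := c + T)
      (C := |C| / T ^ 2) (f := fun x : ℝ => D (x + b * Complex.I)) (fun x hx => by
        rw [Set.uIoc_of_le (by linarith)] at hx
        refine hpt _ (by simpa using hx.1.le) ?_
        refine le_trans ?_ (Complex.abs_im_le_norm _)
        simp [hbT])
    refine this.trans (le_of_eq ?_)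
    rw [add_sub_cancel_left, abs_of_pos hT]
    field_simp
  have hver : ‖∫ y : ℝ in (-T)..T, D ((c + T : ℝ) + y * Complex.I)‖ ≤ 2 * |C| / T := by
    have := intervalIntegral.norm_integral_le_of_norm_le_const (a := -T) (b := T)
      (C := |C| / T ^ 2) (f := fun y : ℝ => D ((c + T : ℝ) + y * Complex.I)) (fun y _ => by
        refine hpt _ (by simpa using hT.le) ?_
        refine le_trans ?_ (Complex.re_le_norm _)
        simp; linarith)
    refine this.trans (le_of_eq ?_)
    rw [sub_neg_eq_add, abs_of_pos (add_pos hT hT)]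
    field_simp; ring
  have e : Complex.I • (∫ y : ℝ in (-T)..T, D (linePt c y)) =
      (∫ x : ℝ in c..(c + T), D (x + ((-T : ℝ) : ℂ) * Complex.I))
      - (∫ x : ℝ in c..(c + T), D (x + (T : ℂ) * Complex.I))
      + Complex.I • (∫ y : ℝ in (-T)..T, D ((c + T : ℝ) + y * Complex.I)) := by
    simp only [linePt]
    linear_combination -hrect
  have hn : ‖∫ y : ℝ in (-T)..T, D (linePt c y)‖ =
      ‖Complex.I • (∫ y : ℝ in (-T)..T, D (linePt c y))‖ := by
    rw [norm_smul, Complex.norm_I, one_mul]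
  change ‖∫ y : ℝ in (-T)..T, D (linePt c y)‖ ≤ _
  rw [hn, e]
  have h1 := hor (-T) (by rw [abs_neg, abs_of_pos hT])
  have h2 := hor T (abs_of_pos hT)
  refine (norm_add_le _ _).trans ?_
  refine (add_le_add_left (norm_sub_le _ _) _).trans ?_
  rw [norm_smul, Complex.norm_I, one_mul]
  have : 4 * |C| / T = |C| / T + |C| / T + 2 * |C| / T := by ring
  rw [this]
  gcongr

/-- The integrand left, up to a constant factor, after integrating out `x`: the logarithmic
derivative of the exponent, times `z⁻²`. -/
noncomputable def gFun (s : ℝ) (z : ℂ) : ℂ := (z ^ 2)⁻¹ * (1 - 2 / z) / qExp s z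

lemma norm_gFun_le {s a : ℝ} {z : ℂ} (ha : 2 < a) (hs : a ≤ s) (hz : a ≤ z.re) (hzs : z ≠ s) :
    ‖gFun s z‖ ≤ 2 / ((1 - 2 / a) * ‖z - s‖) / ‖z‖ ^ 2 := by
  have hδ : 0 < 1 - 2 / a := by rw [sub_pos, div_lt_one] <;> linarith
  have hzn : a ≤ ‖z‖ := hz.trans (Complex.re_le_norm z)
  have h1 : ‖1 - 2 / z‖ ≤ 2 := by
    refine (norm_sub_le _ _).trans ?_
    rw [norm_one, norm_div, Complex.norm_ofNat]
    have : 2 / ‖z‖ ≤ 1 := by rw [div_le_one] <;> linarith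
    linarith
  have h2 := norm_qExp_ge (by linarith) hs hz
  have h3 : 0 < ‖z - s‖ := norm_pos_iff.2 (sub_ne_zero.2 hzs)
  have h4 : ‖gFun s z‖ = ‖1 - 2 / z‖ / ‖qExp s z‖ / ‖z‖ ^ 2 := by
    rw [gFun, norm_div, norm_mul, norm_inv, norm_pow]
    ring
  rw [h4]
  gcongr

/-- The residue computation: along the line `Re z = (s + 2) / 2`, `gFun` and the kernel
`(s - 2) s⁻² / ((z - s) (z - 2))` have the same integral, since they have the same residue at
`s`, the only pole of either to the right of the line. On the line itself the kernel is
`-(s - 2) s⁻² / (d² + t²)` with `d = (s - 2) / 2`. -/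
lemma integral_gFun {s c : ℝ} (hs : 2 < s) (hc : c = (s + 2) / 2) :
    ∫ t, gFun s (linePt c t) = ((-(2 * π / s ^ 2) : ℝ) : ℂ) := by
  have hc2 : 2 < c := by linarith
  have hcs : c < s := by linarith
  have hδ : 0 < 1 - 2 / c := by rw [sub_pos, div_lt_one] <;> linarith
  set U : Set ℂ := {z | 2 < z.re} with hU
  have hUo : IsOpen U := isOpen_lt continuous_const Complex.continuous_re
  have hsU : (s : ℂ) ∈ U := by simpa [hU] using hs
  set r : ℂ → ℂ := dslope (qExp s) s with hr
  have hrd : DifferentiableOn ℂ r U :=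
    (Complex.differentiableOn_dslope (hUo.mem_nhds hsU)).2 fun z hz =>
      (hasDerivAt_qExp (by have : 2 < z.re := hz
                           linarith)).differentiableAt.differentiableWithinAt
  have hrs : r s = 1 - 2 / s := by
    rw [hr, dslope_same, (hasDerivAt_qExp (by simp; linarith)).deriv]
  have hrz : ∀ z : ℂ, z ≠ s → r z = qExp s z / (z - s) := by
    intro z hz
    rw [hr, dslope_of_ne _ hz, slope_def_field, qExp_self (by linarith), sub_zero]
  have hs0 : (s : ℂ) ≠ 0 := by exact_mod_cast (by linarith : s ≠ 0)
  have hs2 : (s : ℂ) - 2 ≠ 0 := by exact_mod_cast (by linarith : s - 2 ≠ 0)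
  have hrne : ∀ z ∈ U, r z ≠ 0 := by
    intro z hz
    by_cases h : z = s
    · rw [h, hrs]
      intro h0
      apply hs2
      field_simp at h0
      rw [h0, mul_zero]
    · rw [hrz z h]
      have ha : 2 < min z.re s := lt_min hz hs
      have hge := norm_qExp_ge (s := s) (by linarith) (min_le_right z.re s) (min_le_left z.re s)
      have : 0 < 1 - 2 / min z.re s := by rw [sub_pos, div_lt_one] <;> linarith
      have h3 : 0 < ‖z - s‖ := norm_pos_iff.2 (sub_ne_zero.2 h)
      exact div_ne_zero (norm_pos_iff.1 (lt_of_lt_of_le (by positivity) hge)) (sub_ne_zero.2 h)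
  have hz0 : ∀ z ∈ U, z ≠ 0 := by
    rintro z hz rfl
    simp [hU] at hz
    linarith
  have hz2 : ∀ z ∈ U, z - 2 ≠ 0 := by
    intro z hz h0
    rw [sub_eq_zero.1 h0] at hz
    simp [hU] at hz
  set κ : ℂ := (((s - 2) / s ^ 2 : ℝ) : ℂ) with hκ
  set F : ℂ → ℂ := fun z => (z ^ 2)⁻¹ * (1 - 2 / z) / r z - κ / (z - 2) with hF
  have hFd : DifferentiableOn ℂ F U := by
    refine DifferentiableOn.sub (DifferentiableOn.div (DifferentiableOn.mul
      (DifferentiableOn.inv (by fun_prop) fun z hz => pow_ne_zero _ (hz0 z hz))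
      (DifferentiableOn.sub (by fun_prop) (DifferentiableOn.div (by fun_prop) (by fun_prop) hz0)))
      hrd hrne) (DifferentiableOn.div (by fun_prop) (by fun_prop) hz2)
  have hFs : F s = 0 := by
    simp only [hF, hrs, hκ]
    have : (1 : ℂ) - 2 / s ≠ 0 := hrs ▸ hrne s hsU
    rw [mul_div_cancel_right₀ _ this]
    push_cast
    field_simp
    simp
  set D : ℂ → ℂ := dslope F s with hDdef
  have hDd : DifferentiableOn ℂ D U :=
    (Complex.differentiableOn_dslope (hUo.mem_nhds hsU)).2 hFd
  have hDz : ∀ z : ℂ, z ≠ s → D z = gFun s z - κ / ((z - s) * (z - 2)) := by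
    intro z hz
    rw [hDdef, dslope_of_ne _ hz, slope_def_field, hFs, sub_zero]
    simp only [hF, hrz z hz, gFun]
    have := sub_ne_zero.2 hz
    rw [sub_div, div_div, div_div, div_mul_cancel₀ _ this, mul_comm (z - 2)]
  have hline : ∀ t, linePt c t ≠ s := by
    intro t h
    have := congrArg Complex.re h
    rw [linePt_re, Complex.ofReal_re] at this
    linarith
  have hker : ∀ t, κ / ((linePt c t - s) * (linePt c t - 2))
      = ((-((s - 2) / s ^ 2) * ((s - c) ^ 2 + t ^ 2)⁻¹ : ℝ) : ℂ) := by
    intro t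
    have : (linePt c t - s) * (linePt c t - 2) = ((-((s - c) ^ 2 + t ^ 2) : ℝ) : ℂ) := by
      have h2 : (2 : ℂ) = ((2 * c - s : ℝ) : ℂ) := by
        rw [hc]; push_cast; ring
      rw [h2]
      simp only [linePt]
      push_cast
      linear_combination (t : ℂ) ^ 2 * Complex.I_sq
    rw [this, hκ, ← Complex.ofReal_div]
    congr 1
    rw [div_neg, neg_mul, div_eq_mul_inv _ ((s - c) ^ 2 + t ^ 2)]
  have hkeri : Integrable fun t => κ / ((linePt c t - s) * (linePt c t - 2)) := by
    simp_rw [hker]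
    exact ((integrable_inv_sq_add_sq (sub_pos.2 hcs)).const_mul _).ofReal
  have hgi : Integrable fun t => gFun s (linePt c t) := by
    refine ((integrable_inv_sq_add_sq (by linarith : 0 < c)).const_mul
      (2 / ((1 - 2 / c) * (s - c)))).mono' (Continuous.aestronglyMeasurable ?_)
      (Filter.Eventually.of_forall fun t => ?_)
    · have h1 := continuous_linePt c
      have h2 := continuous_log_linePt (by linarith : 0 < c)
      have h3 : ∀ t, linePt c t ≠ 0 := linePt_ne_zero (by linarith)
      have h4 : ∀ t, qExp s (linePt c t) ≠ 0 := fun t h0 => by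
        have hge := norm_qExp_ge (s := s) (by linarith : 0 < c) hcs.le (linePt_re c t).ge
        have h3 : 0 < ‖linePt c t - s‖ := norm_pos_iff.2 (sub_ne_zero.2 (hline t))
        rw [h0, norm_zero] at hge
        have : 0 < (1 - 2 / c) * ‖linePt c t - s‖ := by positivity
        linarith
      unfold gFun
      refine Continuous.div (Continuous.mul (Continuous.inv₀ (by fun_prop)
        fun t => pow_ne_zero _ (h3 t)) (continuous_const.sub (continuous_const.div h1 h3))) ?_ h4
      unfold qExp
      fun_prop
    · refine (norm_gFun_le hc2 hcs.le (linePt_re c t).ge (hline t)).trans ?_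
      rw [← norm_linePt_sq, ← div_eq_mul_inv]
      have : s - c ≤ ‖linePt c t - s‖ := by
        have := Complex.abs_re_le_norm (linePt c t - s)
        rw [Complex.sub_re, linePt_re, Complex.ofReal_re, abs_sub_comm,
          abs_of_pos (sub_pos.2 hcs)] at this
        exact this
      have := sub_pos.2 hcs
      gcongr
  have hDi : Integrable fun t => D (linePt c t) := by
    simp_rw [hDz _ (hline _)]
    exact hgi.sub hkeri
  have hzero : ∫ t, D (linePt c t) = 0 := by
    refine integral_line_eq_zero (C := 2 / (1 - 2 / c) + 4 * ‖κ‖) (R := 2 * s) hc2 hDd ?_ hDi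
    intro z hz hzR
    have h1 : ‖z‖ / 2 ≤ ‖z - s‖ := by
      have := norm_sub_norm_le z s
      rw [Complex.norm_real, Real.norm_of_nonneg (by linarith)] at this
      linarith
    have h2 : ‖z‖ / 2 ≤ ‖z - 2‖ := by
      have := norm_sub_norm_le z 2
      rw [Complex.norm_ofNat] at this
      linarith
    have hzs : z ≠ s := by
      rintro rfl
      rw [sub_self, norm_zero] at h1
      linarith
    have hzp : 0 < ‖z‖ := by linarith
    rw [hDz z hzs, add_div]
    refine (norm_sub_le _ _).trans (add_le_add ?_ ?_)
    · refine (norm_gFun_le hc2 hcs.le hz hzs).trans ?_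
      gcongr
      nlinarith
    · rw [norm_div, norm_mul]
      calc ‖κ‖ / (‖z - s‖ * ‖z - 2‖) ≤ ‖κ‖ / (‖z‖ / 2 * (‖z‖ / 2)) := by gcongr
        _ = _ := by field_simp; norm_num
  simp_rw [hDz _ (hline _)] at hzero
  rw [integral_sub hgi hkeri, sub_eq_zero] at hzero
  rw [hzero]
  simp_rw [hker]
  rw [integral_complex_ofReal, integral_const_mul, integral_univ_inv_sq_add_sq (sub_pos.2 hcs)]
  congr 1
  have : s - c = (s - 2) / 2 := by rw [hc]; ring
  rw [this]
  have : s - 2 ≠ 0 := by linarith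
  field_simp

/-! ### The double integral -/

/-- The double integrand: integrating over the line in `t` recovers the density at `x`, and
integrating over `x` gives `gFun`. -/
noncomputable def kernelE (s c x t : ℝ) : ℂ :=
  (1 - 2 / linePt c t) * Complex.exp (-linePt c t) * Complex.exp (x * qExp s (linePt c t))

lemma qExp_line_re (s c t : ℝ) :
    (qExp s (linePt c t)).re = c - 2 * Real.log ‖linePt c t‖ - (s - 2 * Real.log s) := by
  have : (2 * Complex.log (linePt c t)).re = 2 * Real.log ‖linePt c t‖ := by
    rw [← Complex.log_re]; simp
  rw [qExp, Complex.sub_re, Complex.sub_re, linePt_re, this, Complex.ofReal_re]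

/-- `x ↦ x - 2 log x` is strictly increasing on `x ≥ 2`, from `log r < r - 1`. -/
lemma sub_two_log_lt {c s : ℝ} (hc : 2 < c) (hcs : c < s) :
    c - 2 * Real.log c < s - 2 * Real.log s := by
  have hr : 0 < s / c := by apply div_pos <;> linarith
  have h1 := Real.log_le_sub_one_of_pos hr
  rw [Real.log_div (by linarith) (by linarith)] at h1
  have h2 : s / c - 1 = (s - c) / c := by field_simp
  have h3 : (s - c) / c < (s - c) / 2 := by
    apply div_lt_div_of_pos_left <;> linarith
  linarith

lemma qExp_line_re_le {s c : ℝ} (hc : 2 < c) (t : ℝ) :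
    (qExp s (linePt c t)).re ≤ c - 2 * Real.log c - (s - 2 * Real.log s) := by
  have := Real.log_le_log (by linarith) (le_norm_linePt c t)
  rw [qExp_line_re]
  linarith

lemma integrable_kernelE {s c : ℝ} (hc : 2 < c) (hcs : c < s) :
    Integrable (Function.uncurry (kernelE s c)) ((volume.restrict (Set.Ioi 1)).prod volume) := by
  set ε : ℝ := (s - 2 * Real.log s) - (c - 2 * Real.log c) with hε
  have hε0 : 0 < ε := sub_pos.2 (sub_two_log_lt hc hcs)
  have h1 : Integrable (fun x : ℝ => Real.exp (-ε * x)) (volume.restrict (Set.Ioi 1)) :=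
    exp_neg_integrableOn_Ioi 1 hε0
  have h2 := (integrable_inv_sq_add_sq (by linarith : 0 < c)).const_mul (2 * c ^ 2)
  have hmeas : AEStronglyMeasurable (Function.uncurry (kernelE s c))
      ((volume.restrict (Set.Ioi 1)).prod volume) := by
    refine Continuous.aestronglyMeasurable ?_
    have h1 := (continuous_linePt c).comp (continuous_snd : Continuous fun p : ℝ × ℝ => p.2)
    have h2 := (continuous_log_linePt (by linarith : 0 < c)).comp
      (continuous_snd : Continuous fun p : ℝ × ℝ => p.2)
    simp only [Function.comp_def] at h1 h2
    have h3 : ∀ p : ℝ × ℝ, linePt c p.2 ≠ 0 := fun p => linePt_ne_zero (by linarith) _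
    have h4 : Continuous fun p : ℝ × ℝ => 1 - 2 / linePt c p.2 :=
      continuous_const.sub (continuous_const.div h1 h3)
    unfold Function.uncurry kernelE qExp
    fun_prop
  refine (h1.mul_prod h2).mono' hmeas ?_
  have hae : ∀ᵐ p : ℝ × ℝ ∂((volume.restrict (Set.Ioi 1)).prod volume), p.1 ∈ Set.Ioi (1 : ℝ) :=
    Measure.quasiMeasurePreserving_fst.ae (ae_restrict_mem measurableSet_Ioi)
  filter_upwards [hae] with p hp
  obtain ⟨x, t⟩ := p
  have hx : 1 < x := hp
  have hzc := le_norm_linePt c t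
  have hz0 : 0 < ‖linePt c t‖ := by linarith
  have hA : ‖1 - 2 / linePt c t‖ ≤ 2 := by
    refine (norm_sub_le _ _).trans ?_
    rw [norm_one, norm_div, Complex.norm_ofNat]
    have : 2 / ‖linePt c t‖ ≤ 1 := by rw [div_le_one] <;> linarith
    linarith
  have hB : ‖Complex.exp (-linePt c t)‖ ≤ 1 := by
    rw [Complex.norm_exp, Complex.neg_re, linePt_re, Real.exp_le_one_iff]; linarith
  have hC : ‖Complex.exp (x * qExp s (linePt c t))‖ ≤
      Real.exp (-ε * x) * (c ^ 2 * (c ^ 2 + t ^ 2)⁻¹) := by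
    rw [Complex.norm_exp, Complex.re_ofReal_mul, qExp_line_re, ← norm_linePt_sq]
    have e : c ^ 2 * (‖linePt c t‖ ^ 2)⁻¹ =
        Real.exp (2 * (Real.log c - Real.log ‖linePt c t‖)) := by
      rw [← Real.log_div (by linarith) hz0.ne', ← Real.log_rpow (by apply div_pos <;> linarith),
        mul_comm, Real.exp_log (by
          apply Real.rpow_pos_of_pos; apply div_pos <;> linarith)]
      norm_cast
      field_simp
    rw [e, ← Real.exp_add, Real.exp_le_exp]
    have hl := Real.log_le_log (by linarith) hzc
    -- the decay in `t` is extracted from one unit of `x`, as `x ≥ 1`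
    nlinarith
  rw [Function.uncurry_apply_pair, kernelE, norm_mul, norm_mul]
  calc _ ≤ 2 * 1 * (Real.exp (-ε * x) * (c ^ 2 * (c ^ 2 + t ^ 2)⁻¹)) := by gcongr
    _ = _ := by ring

/-- By Bromwich's formula at exponents `2x` and `2x + 1`, the line integral is
`(x-1)^(2x-1) / Γ(2x) - 2 (x-1)^(2x) / Γ(2x+1) = (x-1)^(2x-1) / (x Γ(2x))`
up to the factor `2π` and the exponential tilt. -/
lemma integral_kernelE_line {s c x : ℝ} (hc : 2 < c) (hx : 1 < x) :
    ∫ t, kernelE s c x t = ((2 * π * (Real.exp (-(x * (s - 2 * Real.log s))) *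
      ((x - 1) ^ (2 * x - 1) / (x * Real.Gamma (2 * x)))) : ℝ) : ℂ) := by
  have hc0 : 0 < c := by linarith
  have hy : 0 < x - 1 := by linarith
  have hpt : ∀ t, kernelE s c x t = ((Real.exp (-(x * (s - 2 * Real.log s))) : ℝ) : ℂ) *
      (Complex.exp (((x - 1 : ℝ) : ℂ) * linePt c t) *
        Complex.exp (-((2 * x : ℝ) : ℂ) * Complex.log (linePt c t)) -
      2 * (Complex.exp (((x - 1 : ℝ) : ℂ) * linePt c t) *
        Complex.exp (-((2 * x + 1 : ℝ) : ℂ) * Complex.log (linePt c t)))) := by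
    intro t
    have hz := linePt_ne_zero hc0 t
    have h1 : Complex.exp (-((2 * x + 1 : ℝ) : ℂ) * Complex.log (linePt c t)) =
        Complex.exp (-((2 * x : ℝ) : ℂ) * Complex.log (linePt c t)) * (linePt c t)⁻¹ := by
      have : -((2 * x + 1 : ℝ) : ℂ) * Complex.log (linePt c t) =
          -((2 * x : ℝ) : ℂ) * Complex.log (linePt c t) + -Complex.log (linePt c t) := by
        push_cast; ring
      rw [this, Complex.exp_add, Complex.exp_neg, Complex.exp_log hz]
    have h2 : Complex.exp (-linePt c t) * Complex.exp (x * qExp s (linePt c t)) =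
        ((Real.exp (-(x * (s - 2 * Real.log s))) : ℝ) : ℂ) *
        (Complex.exp (((x - 1 : ℝ) : ℂ) * linePt c t) *
        Complex.exp (-((2 * x : ℝ) : ℂ) * Complex.log (linePt c t))) := by
      rw [Complex.ofReal_exp, ← Complex.exp_add, ← Complex.exp_add, ← Complex.exp_add]
      congr 1
      simp only [qExp]
      push_cast
      ring
    rw [kernelE, mul_assoc, h2, h1]
    ring
  simp_rw [hpt]
  rw [integral_const_mul, integral_sub (integrable_bromwich hc0 (by linarith) _)
    ((integrable_bromwich hc0 (by linarith) _).const_mul 2), integral_const_mul,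
    integral_bromwich hc0 (by linarith) hy, integral_bromwich hc0 (by linarith) hy]
  norm_cast
  have hG : Real.Gamma (2 * x) ≠ 0 := (Real.Gamma_pos_of_pos (by linarith)).ne'
  rw [Real.Gamma_add_one (by linarith), show 2 * x + 1 - 1 = 2 * x - 1 + 1 by ring,
    Real.rpow_add_one hy.ne']
  have : x ≠ 0 := by linarith
  field_simp
  ring

lemma integral_kernelE_Ioi {s c : ℝ} (hc : 2 < c) (hcs : c < s) (t : ℝ) :
    ∫ x in Set.Ioi 1, kernelE s c x t =
      -((Real.exp (-(s - 2 * Real.log s)) : ℝ) : ℂ) * gFun s (linePt c t) := by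
  have hre : (qExp s (linePt c t)).re < 0 :=
    (qExp_line_re_le hc t).trans_lt (sub_neg.2 (sub_two_log_lt hc hcs))
  have hz := linePt_ne_zero (by linarith : 0 < c) t
  have h1 : Complex.exp (-linePt c t) * Complex.exp (qExp s (linePt c t)) =
      ((Real.exp (-(s - 2 * Real.log s)) : ℝ) : ℂ) * (linePt c t ^ 2)⁻¹ := by
    have h2 : (linePt c t ^ 2)⁻¹ = Complex.exp (-(2 * Complex.log (linePt c t))) := by
      rw [Complex.exp_neg, two_mul, Complex.exp_add, Complex.exp_log hz, sq]
    rw [h2, Complex.ofReal_exp, ← Complex.exp_add, ← Complex.exp_add]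
    congr 1
    simp only [qExp]
    push_cast
    ring
  simp only [kernelE]
  rw [integral_const_mul]
  simp_rw [mul_comm _ (qExp s (linePt c t))]
  rw [integral_exp_mul_complex_Ioi hre, Complex.ofReal_one, mul_one, gFun]
  linear_combination (-(1 - 2 / linePt c t) / qExp s (linePt c t)) * h1

/-- For `p < 1/2` the cascade density integrates to `1` over `(1, ∞)`. -/
theorem cascade_density_normalized (p : ℝ) (hp0 : 0 < p) (hp : p < 1/2) :
    (∫ x in Set.Ioi (1:ℝ), cascadeDensity p x) = 1 := by
  obtain ⟨s, hs⟩ : ∃ s, s = 1 / p := ⟨_, rfl⟩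
  have hs2 : 2 < s := by rw [hs, lt_div_iff₀ hp0]; linarith
  obtain ⟨c, hc⟩ : ∃ c, c = (s + 2) / 2 := ⟨_, rfl⟩
  have hc2 : 2 < c := by linarith
  have hcs : c < s := by linarith
  have hlog : Real.log p = -Real.log s := by rw [hs, one_div, Real.log_inv, neg_neg]
  have hdens : ∀ x ∈ Set.Ioi (1 : ℝ), ((cascadeDensity p x : ℝ) : ℂ) =
      ((Real.exp s / (2 * π) : ℝ) : ℂ) * ∫ t, kernelE s c x t := by
    intro x hx
    rw [integral_kernelE_line hc2 hx, ← Complex.ofReal_mul]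
    congr 1
    have : Real.exp (-(1 / p + 2 * Real.log p) * x + 1 / p) =
        Real.exp s * Real.exp (-(x * (s - 2 * Real.log s))) := by
      rw [← Real.exp_add, hlog, ← hs]
      congr 1; ring
    rw [cascadeDensity, this]
    field_simp
  have hmain : ((∫ x in Set.Ioi (1:ℝ), cascadeDensity p x : ℝ) : ℂ) = 1 := by
    rw [← integral_complex_ofReal, setIntegral_congr_fun measurableSet_Ioi hdens,
      integral_const_mul, integral_integral_swap (integrable_kernelE hc2 hcs)]
    simp_rw [integral_kernelE_Ioi hc2 hcs]
    rw [integral_const_mul, integral_gFun hs2 hc]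
    norm_cast
    have h : Real.exp (-(s - 2 * Real.log s)) = Real.exp (-s) * s ^ 2 := by
      rw [neg_sub, sub_eq_add_neg, add_comm, Real.exp_add, two_mul, Real.exp_add,
        Real.exp_log (by linarith), sq]
    rw [h, Real.exp_neg]
    have : s ≠ 0 := by linarith
    field_simp
  exact_mod_cast hmain
end

section
/- For p > 1/2, ∫₁^∞ (x−1)^{2x−1} e^{−(1/p + 2 ln p)x + 1/p} / (x Γ(2x)) dx = e^{χ(p)}, where χ(p) = 2 W_{−1}(−e^{−1/(2p)}/(2p)) + 1/p and W_{−1} is the lower real branch of the Lambert W function. -/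
/-!
Put `μ = 1 / (2p) < 1` and `m = -w > 1`, so that `m e^{-m} = μ e^{-μ}`, i.e.
`m - log m = μ - log μ =: s > 1`. Substituting `x = 1 + t / 2` turns the integral into
`μ² ∫₀^∞ e^{-st} h(t) dt` with `h(t) = t^{t+1} / Γ(t+2) - t^{t+2} / Γ(t+3)`
(`cascadeDensity_comp`), and the claim becomes `∫₀^∞ e^{-st} h(t) dt = m⁻²` (`laplace_eq`),
because `μ² / m² = e^{2(μ - m)} = e^{2w + 1/p}`.

By Fourier inversion of the Gamma density (`inverse_laplace`), `t^{β-1} / Γ(β)` is the integral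
of `e^{zt} z^{-β}` over the line `z = 1 + 2πiξ`, `ξ ∈ ℝ`. Inserting this for `β = t + 2` and
`β = t + 3` and exchanging the integrals gives
`∫₀^∞ e^{-st} h(t) dt = ∫ z⁻² (1 - z⁻¹) / (s - z + log z) dξ` (`laplace_eq_line_integral`).

The inversion `z = 1 / w` maps the line to the circle `|w - 1/2| = 1/2`
(`line_integral_eq_circleIntegral`), and the integrand becomes `w (1 - w) / N(w)` with
`N(w) = s w - 1 - w log w`. It extends continuously to the closed disc, including `w = 0`,
except for a simple pole at `w = 1 / m`: the only solution of `z - log z = s` with `Re z ≥ 1`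
is `z = m`, since `log` is a strict contraction on `Re z > 1` (`eq_of_sub_log_eq`).
The residue there is `m⁻²` (`circleIntegral_residue`).
-/

open Real MeasureTheory

open Set

/-! ### Fourier inversion of the Gamma density -/

open ProbabilityTheory in
/-- The Gamma integral with complex rate. Both sides are analytic in `z` on the right half-plane
(the left one as the complex moment generating function of `x^{β-1} dx` at `-z`), and they agree
for real `z`. -/
theorem laplace_rpow {β : ℝ} (hβ : 0 < β) {z : ℂ} (hz : 0 < z.re) :
    ∫ x in Ioi (0 : ℝ), Complex.exp (-(z * x)) * ((x ^ (β - 1) : ℝ) : ℂ)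
      = z ^ (-β : ℂ) * Real.Gamma β := by
  set ρ : ℝ → NNReal := fun x => (x ^ (β - 1)).toNNReal with hρ
  have hρm : Measurable ρ := by fun_prop
  set μ : Measure ℝ := (volume.restrict (Ioi (0 : ℝ))).withDensity (fun x => (ρ x : ENNReal))
    with hμ
  have hmgf (u : ℂ) : complexMGF id μ u
      = ∫ x in Ioi (0 : ℝ), Complex.exp (u * x) * ((x ^ (β - 1) : ℝ) : ℂ) := by
    rw [complexMGF, hμ, integral_withDensity_eq_integral_smul hρm]
    refine setIntegral_congr_fun measurableSet_Ioi fun x (hx : 0 < x) => ?_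
    simp only [hρ, id, NNReal.smul_def, Complex.real_smul, coe_toNNReal _ (rpow_nonneg hx.le _)]
    rw [mul_comm]
  have hint : Iio (0 : ℝ) ⊆ interior (integrableExpSet id μ) := by
    refine isOpen_Iio.subset_interior_iff.mpr fun t (ht : t < 0) => ?_
    simp only [integrableExpSet, mem_ofPred_eq, hμ]
    rw [integrable_withDensity_iff_integrable_smul hρm]
    have h := integrableOn_rpow_mul_exp_neg_mul_rpow (s := β - 1) (p := 1) (b := -t)
      (by linarith) one_pos (by linarith)
    refine h.congr_fun (fun x (hx : 0 < x) => ?_) measurableSet_Ioi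
    simp [hρ, NNReal.smul_def, rpow_nonneg hx.le, rpow_one]
  have hopen : IsOpen {u : ℂ | u.re < 0} := isOpen_lt Complex.continuous_re continuous_const
  have hconv : Convex ℝ {u : ℂ | u.re < 0} := convex_halfSpace_re_lt 0
  have hA : AnalyticOnNhd ℂ (complexMGF id μ) {u : ℂ | u.re < 0} :=
    fun u hu => analyticAt_complexMGF (hint hu)
  have hB : AnalyticOnNhd ℂ (fun u : ℂ => (-u) ^ (-β : ℂ) * Real.Gamma β) {u : ℂ | u.re < 0} := by
    refine DifferentiableOn.analyticOnNhd (fun u (hu : u.re < 0) => ?_) hopen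
    refine DifferentiableAt.differentiableWithinAt ?_
    refine DifferentiableAt.mul_const ?_ _
    refine DifferentiableAt.cpow_const (by fun_prop) (Or.inl ?_)
    simpa using hu
  have hreal (r : ℝ) (hr : 0 < r) :
      complexMGF id μ (-r : ℂ) = (-(-r : ℂ)) ^ (-β : ℂ) * Real.Gamma β := by
    rw [hmgf, neg_neg]
    have h := integral_rpow_mul_exp_neg_mul_Ioi hβ hr
    have h2 := congrArg (fun y : ℝ => (y : ℂ)) h
    rw [← integral_complex_ofReal] at h2
    rw [one_div, inv_rpow hr.le, ← rpow_neg hr.le, Complex.ofReal_mul,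
      Complex.ofReal_cpow hr.le] at h2
    push_cast at h2 ⊢
    rw [← h2]
    refine integral_congr_ae (Filter.Eventually.of_forall fun x => ?_)
    simp only
    rw [mul_comm]
    ring_nf
  have key := hA.eqOn_of_preconnected_of_frequently_eq hB hconv.isPreconnected
    (z₀ := -1) (by simp) ?_
  · have := key (x := -z) (by simpa using hz)
    rw [hmgf] at this
    simpa using this
  · have h1 : Filter.Tendsto (fun r : ℝ => (-r : ℂ)) (nhdsWithin 1 {1}ᶜ)
        (nhdsWithin (-1) {-1}ᶜ) := by
      refine tendsto_nhdsWithin_iff.mpr ⟨?_, ?_⟩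
      · have : Continuous (fun r : ℝ => (-r : ℂ)) := by fun_prop
        simpa using (this.tendsto 1).mono_left nhdsWithin_le_nhds
      · filter_upwards [self_mem_nhdsWithin] with r hr
        simpa using hr
    refine h1.frequently (Filter.Eventually.frequently ?_)
    filter_upwards [nhdsWithin_le_nhds (lt_mem_nhds one_pos)] with r hr
    exact hreal r hr

/-- The vertical line `Re z = 1`, parametrised by frequency as in Mathlib's Fourier transform. -/
noncomputable def vline (ξ : ℝ) : ℂ := 1 + 2 * π * ξ * Complex.I

theorem vline_re (ξ : ℝ) : (vline ξ).re = 1 := by simp [vline]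
theorem vline_im (ξ : ℝ) : (vline ξ).im = 2 * π * ξ := by simp [vline]
theorem vline_ne_zero (ξ : ℝ) : vline ξ ≠ 0 := fun h => by
  have := vline_re ξ; rw [h] at this; simp at this
theorem vline_mem (ξ : ℝ) : vline ξ ∈ Complex.slitPlane := by
  left; simp [vline_re]
theorem one_le_norm_vline (ξ : ℝ) : 1 ≤ ‖vline ξ‖ := by
  have := Complex.abs_re_le_norm (vline ξ); rwa [vline_re, abs_one] at this
theorem continuous_vline : Continuous vline := by unfold vline; fun_prop

/-- `‖vline ξ‖² = 1 + (2πξ)²`, so this is a rescaled Japanese bracket. -/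
theorem integrable_norm_vline {β : ℝ} (hβ : 1 < β) :
    Integrable fun ξ : ℝ => ‖vline ξ‖ ^ (-β) := by
  have h := integrable_rpow_neg_one_add_norm_sq (E := ℝ) (μ := volume) (r := β) (by simpa using hβ)
  have h2 := h.comp_mul_left' (R := 2 * π) (by positivity)
  refine h2.congr (Filter.Eventually.of_forall fun ξ => ?_)
  have : 1 + ‖2 * π * ξ‖ ^ 2 = ‖vline ξ‖ ^ (2 : ℝ) := by
    rw [rpow_two, ← Complex.normSq_eq_norm_sq, Complex.normSq_apply, vline_re, vline_im]
    simp only [norm_eq_abs, sq_abs]; ring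
  simp only [this]
  rw [← rpow_mul (norm_nonneg _)]
  ring_nf

open FourierTransform in
/-- Inverse Laplace transform of `z^{-β}` along `Re z = 1`: Fourier inversion for
`x ↦ x^{β-1} e^{-x}` on `x > 0`, which extended by zero is continuous because `β > 1`. -/
theorem inverse_laplace {β t : ℝ} (hβ : 1 < β) (ht : 0 < t) :
    ∫ ξ : ℝ, Complex.exp (vline ξ * t) * vline ξ ^ (-β : ℂ)
      = ((t ^ (β - 1) / Real.Gamma β : ℝ) : ℂ) := by
  -- `0 ^ (β - 1) = 0`, so truncating the base at zero extends the density by zero.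
  set f : ℝ → ℂ := fun x => ((max x 0 ^ (β - 1) * Real.exp (-x) : ℝ) : ℂ) with hf
  have hΓ : (Real.Gamma β : ℂ) ≠ 0 := by
    exact_mod_cast (Real.Gamma_pos_of_pos (by linarith : 0 < β)).ne'
  have hzero {x : ℝ} (hx : x ∉ Ioi (0 : ℝ)) : f x = 0 := by
    simp only [mem_Ioi, not_lt] at hx
    simp [hf, max_eq_right hx, zero_rpow (by linarith : β - 1 ≠ 0)]
  have hcont : Continuous f := by
    refine Complex.continuous_ofReal.comp (Continuous.mul ?_ (by fun_prop))
    exact (by fun_prop : Continuous fun x : ℝ => max x 0).rpow_const fun x => Or.inr (by linarith)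
  have hfint : Integrable f := by
    rw [← integrableOn_iff_integrable_of_support_subset (s := Ioi 0)
      (fun x hx => by by_contra h; exact hx (hzero h))]
    have := (Real.GammaIntegral_convergent (by linarith : 0 < β)).ofReal (𝕜 := ℂ)
    refine IntegrableOn.congr_fun this (fun x (hx : 0 < x) => ?_) measurableSet_Ioi
    simp [hf, max_eq_left hx.le, mul_comm]
  have hF (ξ : ℝ) : 𝓕 f ξ = vline ξ ^ (-β : ℂ) * Real.Gamma β := by
    rw [Real.fourier_real_eq_integral_exp_smul, ← laplace_rpow (by linarith) (by simp [vline_re]),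
      ← setIntegral_eq_integral_of_forall_compl_eq_zero (s := Ioi 0)
      (fun x hx => by rw [hzero hx, smul_zero])]
    refine setIntegral_congr_fun measurableSet_Ioi fun x (hx : 0 < x) => ?_
    simp only [hf, max_eq_left hx.le, vline, smul_eq_mul]
    push_cast
    rw [mul_comm (Complex.ofReal _) (Complex.exp (-_)), ← mul_assoc, ← Complex.exp_add]
    ring_nf
  have hFint : Integrable (𝓕 f) := by
    have : 𝓕 f = fun ξ => vline ξ ^ (-β : ℂ) * Real.Gamma β := funext hF
    rw [this]
    refine Integrable.mul_const ?_ _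
    refine (integrable_norm_vline hβ).mono' ?_ (Filter.Eventually.of_forall fun ξ => ?_)
    · refine Continuous.aestronglyMeasurable ?_
      exact continuous_vline.cpow continuous_const vline_mem
    · rw [← Complex.ofReal_neg, Complex.norm_cpow_real]
  have hinv := congrFun (hcont.fourierInv_fourier_eq hfint hFint) t
  rw [Real.fourierInv_eq'] at hinv
  simp only [hF] at hinv
  have : ∀ ξ : ℝ, Complex.exp (vline ξ * t) * vline ξ ^ (-β : ℂ)
      = (Real.exp t / Real.Gamma β : ℂ) * (Complex.exp (((2 * π * inner ℝ ξ t : ℝ) : ℂ) * Complex.I) •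
        (vline ξ ^ (-β : ℂ) * Real.Gamma β)) := by
    intro ξ
    have h : Complex.exp (vline ξ * t)
        = Real.exp t * Complex.exp (((2 * π * inner ℝ ξ t : ℝ) : ℂ) * Complex.I) := by
      push_cast
      rw [← Complex.exp_add]
      simp [vline]
      ring_nf
    rw [h, smul_eq_mul]
    field_simp
  simp_rw [this]
  rw [integral_const_mul, hinv]
  simp only [hf, max_eq_left ht.le]
  rw [← Complex.ofReal_div, ← Complex.ofReal_mul]
  congr 1
  rw [Real.exp_neg]
  field_simp

/-! ### The Laplace transform as a circle integral -/

theorem integrable_inverse_laplace {β : ℝ} (hβ : 1 < β) (t : ℝ) :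
    Integrable fun ξ : ℝ => Complex.exp (vline ξ * t) * vline ξ ^ (-β : ℂ) := by
  refine ((integrable_norm_vline hβ).const_mul (Real.exp t)).mono' ?_
    (Filter.Eventually.of_forall fun ξ => ?_)
  · refine Continuous.aestronglyMeasurable ?_
    have := continuous_vline
    exact (by fun_prop : Continuous fun ξ : ℝ => Complex.exp (vline ξ * t)).mul
      (continuous_vline.cpow continuous_const vline_mem)
  · rw [norm_mul, Complex.norm_exp, ← Complex.ofReal_neg, Complex.norm_cpow_real]
    simp [vline_re]

/-- On `Re z = 1` one has `Re (s - z + log z) = s - 1 + log |z| ≥ s - 1 > 0`, which makes the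
double integral absolutely convergent and the inner `t`-integral an elementary exponential one. -/
theorem laplace_eq_line_integral {s : ℝ} (hs : 1 < s) :
    ∫ t in Ioi (0 : ℝ), ((Real.exp (-s * t) * (t ^ (t + 1) / Real.Gamma (t + 2)
        - t ^ (t + 2) / Real.Gamma (t + 3)) : ℝ) : ℂ)
      = ∫ ξ : ℝ, vline ξ ^ (-2 : ℂ) * (1 - (vline ξ)⁻¹) / (s - vline ξ + Complex.log (vline ξ)) := by
  set F : ℝ → ℝ → ℂ := fun t ξ =>
    Complex.exp ((vline ξ - s - Complex.log (vline ξ)) * t) *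
      (vline ξ ^ (-2 : ℂ) * (1 - (vline ξ)⁻¹)) with hF
  have hlog : Continuous fun ξ => Complex.log (vline ξ) := continuous_vline.clog vline_mem
  have hinv : Continuous fun ξ => (vline ξ)⁻¹ := continuous_vline.inv₀ vline_ne_zero
  have hpow : Continuous fun ξ => vline ξ ^ (-2 : ℂ) :=
    continuous_vline.cpow continuous_const vline_mem
  have hre (ξ : ℝ) : (vline ξ - s - Complex.log (vline ξ)).re ≤ -(s - 1) := by
    simp only [Complex.sub_re, vline_re, Complex.ofReal_re, Complex.log_re]
    have := Real.log_nonneg (one_le_norm_vline ξ)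
    linarith
  have hFint : Integrable (Function.uncurry F) ((volume.restrict (Ioi 0)).prod volume) := by
    have h1 : Integrable (fun t : ℝ => Real.exp (-(s - 1) * t)) (volume.restrict (Ioi 0)) :=
      exp_neg_integrableOn_Ioi 0 (by linarith)
    have h2 : Integrable fun ξ : ℝ => 2 * ‖vline ξ‖ ^ (-2 : ℝ) :=
      (integrable_norm_vline one_lt_two).const_mul 2
    refine (h1.mul_prod h2).mono' ?_ ?_
    · refine Continuous.aestronglyMeasurable ?_
      have := continuous_vline
      have hlog2 : Continuous fun p : ℝ × ℝ => Complex.log (vline p.2) := hlog.comp continuous_snd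
      have hpow2 : Continuous fun p : ℝ × ℝ => vline p.2 ^ (-2 : ℂ) := hpow.comp continuous_snd
      have hinv2 : Continuous fun p : ℝ × ℝ => (vline p.2)⁻¹ := hinv.comp continuous_snd
      simp only [hF, Function.uncurry_def]
      fun_prop
    · rw [← Measure.restrict_univ (μ := (volume : Measure ℝ)), Measure.prod_restrict]
      filter_upwards [ae_restrict_mem (measurableSet_Ioi.prod MeasurableSet.univ)] with ⟨t, ξ⟩ hx
      have ht : 0 < t := hx.1
      simp only [Function.uncurry_apply_pair, hF, norm_mul, Complex.norm_exp]
      have e1 : ((vline ξ - s - Complex.log (vline ξ)) * t).re ≤ -(s - 1) * t := by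
        rw [Complex.re_mul_ofReal]
        exact mul_le_mul_of_nonneg_right (hre ξ) ht.le
      have e2 : ‖vline ξ ^ (-2 : ℂ)‖ = ‖vline ξ‖ ^ (-2 : ℝ) := by
        rw [← Complex.norm_cpow_real]; norm_num
      have e3 : ‖1 - (vline ξ)⁻¹‖ ≤ 2 := by
        refine (norm_sub_le _ _).trans ?_
        have := inv_le_one_of_one_le₀ (one_le_norm_vline ξ)
        rw [norm_one, norm_inv]
        linarith
      rw [e2, mul_comm (2 : ℝ)]
      gcongr
  have hL : ∀ t ∈ Ioi (0 : ℝ), ((Real.exp (-s * t) * (t ^ (t + 1) / Real.Gamma (t + 2)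
        - t ^ (t + 2) / Real.Gamma (t + 3)) : ℝ) : ℂ) = ∫ ξ, F t ξ := by
    intro t (ht : 0 < t)
    have a1 := inverse_laplace (β := t + 2) (by linarith) ht
    have a2 := inverse_laplace (β := t + 3) (by linarith) ht
    rw [Complex.ofReal_mul, Complex.ofReal_sub,
      show t + 1 = t + 2 - 1 by ring, ← a1]
    rw [show t ^ (t + 2) = t ^ (t + 3 - 1) by ring_nf, ← a2,
      ← integral_sub (integrable_inverse_laplace (by linarith) t)
        (integrable_inverse_laplace (by linarith) t), ← integral_const_mul]
    refine integral_congr_ae (Filter.Eventually.of_forall fun ξ => ?_)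
    simp only [hF]
    have hz := vline_ne_zero ξ
    have b2 : vline ξ ^ (-((t + 3 : ℝ) : ℂ)) = vline ξ ^ (-((t + 2 : ℝ) : ℂ)) * (vline ξ)⁻¹ := by
      rw [← Complex.cpow_neg_one, ← Complex.cpow_add _ _ hz]
      congr 1; push_cast; ring
    have b1 : vline ξ ^ (-((t + 2 : ℝ) : ℂ))
        = Complex.exp (-Complex.log (vline ξ) * t) * vline ξ ^ (-2 : ℂ) := by
      rw [Complex.cpow_def_of_ne_zero hz, Complex.cpow_def_of_ne_zero hz, ← Complex.exp_add]
      congr 1; push_cast; ring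
    have b3 : Complex.exp ((vline ξ - s - Complex.log (vline ξ)) * t)
        = Complex.exp (-s * t) * Complex.exp (vline ξ * t)
          * Complex.exp (-Complex.log (vline ξ) * t) := by
      rw [← Complex.exp_add, ← Complex.exp_add]
      ring_nf
    rw [b2, b1, b3]
    push_cast
    ring
  rw [setIntegral_congr_fun measurableSet_Ioi hL, integral_integral_swap hFint]
  refine integral_congr_ae (Filter.Eventually.of_forall fun ξ => ?_)
  simp only [hF]
  have hneg : (vline ξ - s - Complex.log (vline ξ)).re < 0 := (hre ξ).trans_lt (by linarith)
  rw [integral_mul_const, integral_exp_mul_complex_Ioi hneg]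
  have hD : vline ξ - s - Complex.log (vline ξ) = -(s - vline ξ + Complex.log (vline ξ)) := by ring
  rw [hD]
  simp only [Complex.ofReal_zero, mul_zero, Complex.exp_zero]
  rw [neg_div_neg_eq]
  ring

/-- Change of variables `w = 1 / z` from the line `Re z = 1` to the circle with diameter `[0, 1]`.
No regularity of `G` is needed. -/
theorem line_integral_eq_circleIntegral (G : ℂ → ℂ) :
    ∫ ξ : ℝ, (vline ξ)⁻¹ ^ 2 * G (vline ξ)⁻¹
      = (2 * π * Complex.I)⁻¹ * ∮ w in C(1 / 2, 1 / 2), G w := by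
  -- The angle about `1 / 2` of the point `1 / (1 + iy)`, `y = 2πξ`, is twice its argument
  -- `-arctan y`.
  set φ : ℝ → ℝ := fun ξ => -2 * arctan (2 * π * ξ) with hφ
  have hcm (ξ : ℝ) : circleMap (1 / 2) (1 / 2) (φ ξ) = (vline ξ)⁻¹ := by
    set y := 2 * π * ξ with hy
    have hc : Complex.cos (arctan y) ≠ 0 := by
      rw [← Complex.ofReal_cos]; exact_mod_cast (cos_arctan_pos y).ne'
    have hs : Complex.sin (arctan y) = y * Complex.cos (arctan y) := by
      rw [← Complex.ofReal_cos, ← Complex.ofReal_sin, ← Complex.ofReal_mul]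
      congr 1
      have := tan_arctan y
      rw [tan_eq_sin_div_cos, div_eq_iff (cos_arctan_pos y).ne'] at this
      exact this
    have hz : vline ξ = 1 + y * Complex.I := by simp [vline, hy]
    have hE : Complex.exp (φ ξ * Complex.I)
        = (Complex.cos (arctan y) - Complex.sin (arctan y) * Complex.I) ^ 2 := by
      have : Complex.exp (φ ξ * Complex.I) = Complex.exp (-(arctan y : ℂ) * Complex.I) ^ 2 := by
        rw [← Complex.exp_nat_mul]; simp only [hφ, ← hy]; push_cast; ring_nf
      rw [this, Complex.exp_mul_I, Complex.cos_neg, Complex.sin_neg]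
      ring
    have h1 : Complex.cos (arctan y) ^ 2 + Complex.sin (arctan y) ^ 2 = 1 := by
      rw [add_comm]; exact Complex.sin_sq_add_cos_sq _
    rw [circleMap, hE]
    refine eq_inv_of_mul_eq_one_left ?_
    rw [hz]
    rw [hs] at h1 ⊢
    rw [Complex.ofReal_div, Complex.ofReal_one, Complex.ofReal_ofNat]
    linear_combination (1 / 2 - y * Complex.I / 2 : ℂ) * h1
      - 1 / 2 * Complex.cos (arctan y) ^ 2 * (1 - y * Complex.I) * y ^ 2 * Complex.I_sq
  have hderiv (ξ : ℝ) : HasDerivAt φ (-2 * (1 / (1 + (2 * π * ξ) ^ 2) * (2 * π))) ξ := by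
    refine HasDerivAt.const_mul _ ?_
    refine HasDerivAt.arctan ?_
    simpa using (hasDerivAt_id ξ).const_mul (2 * π)
  have hinj : InjOn φ univ := by
    intro a _ b _ hab
    have h1 : arctan (2 * π * a) = arctan (2 * π * b) := by
      simp only [hφ] at hab; linarith
    exact mul_left_cancel₀ (by positivity) (arctan_injective h1)
  have himage : φ '' univ = Ioo (-π) π := by
    ext θ
    simp only [image_univ, mem_range, mem_Ioo, hφ]
    constructor
    · rintro ⟨ξ, rfl⟩
      have := arctan_lt_pi_div_two (2 * π * ξ)
      have := neg_pi_div_two_lt_arctan (2 * π * ξ)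
      constructor <;> linarith
    · rintro ⟨h1, h2⟩
      refine ⟨tan (-θ / 2) / (2 * π), ?_⟩
      rw [mul_div_cancel₀ _ (by positivity), arctan_tan (by linarith) (by linarith)]
      ring
  have hper : Function.Periodic (fun θ : ℝ => deriv (circleMap (1 / 2 : ℂ) (1 / 2)) θ •
      G (circleMap (1 / 2) (1 / 2) θ)) (2 * π) := by
    intro θ
    simp only [deriv_circleMap, periodic_circleMap (0 : ℂ) (1 / 2) θ,
      periodic_circleMap (1 / 2 : ℂ) (1 / 2) θ]
  have hcirc : (∮ w in C(1 / 2, 1 / 2), G w) = ∫ θ in Ioo (-π) π,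
      deriv (circleMap (1 / 2 : ℂ) (1 / 2)) θ • G (circleMap (1 / 2) (1 / 2) θ) := by
    rw [circleIntegral]
    -- The angles `φ ξ` fill `(-π, π)`, while `circleIntegral` runs over `[0, 2π]`.
    have := hper.intervalIntegral_add_eq 0 (-π)
    rw [zero_add, show -π + 2 * π = π by ring] at this
    rw [this, intervalIntegral.integral_of_le (by linarith [pi_pos]),
      integral_Ioc_eq_integral_Ioo]
  rw [hcirc, ← himage, integral_image_eq_integral_abs_deriv_smul MeasurableSet.univ
    (fun x _ => (hderiv x).hasDerivWithinAt) hinj, setIntegral_univ, ← integral_const_mul]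
  refine integral_congr_ae (Filter.Eventually.of_forall fun ξ => ?_)
  have hcm0 : circleMap 0 (1 / 2) (φ ξ) = (vline ξ)⁻¹ - 1 / 2 := by
    rw [← hcm ξ]; simp [circleMap]
  simp only [deriv_circleMap, hcm, hcm0]
  have habs : |-2 * (1 / (1 + (2 * π * ξ) ^ 2) * (2 * π))|
      = 4 * π / (1 + (2 * π * ξ) ^ 2) := by
    rw [abs_mul, abs_of_neg (by norm_num : (-2 : ℝ) < 0), abs_of_pos (by positivity)]
    ring
  rw [habs, Complex.real_smul, smul_eq_mul]
  have hz := vline_ne_zero ξ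
  have hy2 : (1 + (2 * π * ξ) ^ 2 : ℂ) = vline ξ * (2 - vline ξ) := by
    simp only [vline]; linear_combination (2 * π * ξ) ^ 2 * Complex.I_sq
  have hy3 : vline ξ * (2 - vline ξ) ≠ 0 := by
    rw [← hy2]
    exact_mod_cast (by positivity : 1 + (2 * π * ξ) ^ 2 ≠ 0)
  have hy4 := right_ne_zero_of_mul hy3
  have hpi : (π : ℂ) ≠ 0 := by exact_mod_cast pi_ne_zero
  push_cast
  rw [hy2]
  field_simp
  ring

/-! ### Residue calculus on the disc -/

/-- `m` is the only solution of `z - log z = m - log m` in `Re z ≥ 1`. Taking real parts excludes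
`Re z = 1`; for `Re z > 1` the mean value inequality gives
`|z - m| = |log z - log m| < |z - m|` unless `z = m`. -/
theorem eq_of_sub_log_eq {m : ℝ} (hm : 1 < m) {z : ℂ} (hz : 1 ≤ z.re)
    (h : z - Complex.log z = m - Complex.log m) : z = m := by
  have hzne : z ≠ 0 := fun h0 => by rw [h0] at hz; simp at hz; linarith
  have hz1 : 1 < z.re := by
    have h1 := congrArg Complex.re h
    simp only [Complex.sub_re, Complex.log_re, Complex.ofReal_re, Complex.norm_real,
      norm_eq_abs, abs_of_pos (one_pos.trans hm)] at h1
    have h2 : 0 ≤ log ‖z‖ := log_nonneg (hz.trans ((le_abs_self _).trans (Complex.abs_re_le_norm z)))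
    have h3 := log_lt_sub_one_of_pos (one_pos.trans hm) hm.ne'
    linarith
  set c := min z.re m with hc
  have hc1 : 1 < c := lt_min hz1 hm
  have hconv : Convex ℝ {u : ℂ | c ≤ u.re} := convex_halfSpace_re_ge c
  have hslit : ∀ u ∈ {u : ℂ | c ≤ u.re}, u ∈ Complex.slitPlane := fun u hu =>
    Or.inl (by have : c ≤ u.re := hu; linarith)
  have hb := hconv.norm_image_sub_le_of_norm_deriv_le (𝕜 := ℂ) (f := Complex.log) (C := c⁻¹)
    (x := (m : ℂ)) (y := z)
    (fun u hu => Complex.differentiableAt_log (hslit u hu)) (fun u hu => ?_)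
    (by simp [hc]) (by simp [hc])
  · by_contra hne
    have hpos : 0 < ‖z - m‖ := norm_pos_iff.mpr (sub_ne_zero.mpr hne)
    have heq : Complex.log z - Complex.log m = z - m := by linear_combination -h
    rw [heq] at hb
    have : c⁻¹ < 1 := inv_lt_one_of_one_lt₀ hc1
    nlinarith
  · rw [(Complex.hasDerivAt_log (hslit u hu)).deriv, norm_inv]
    have h1 : c ≤ u.re := hu
    have h2 := Complex.re_le_norm u
    exact inv_anti₀ (by linarith) (h1.trans h2)

/-- The junk value `log 0 = 0` is the right one here: `w log w → 0`, as `Im log w` is bounded. -/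
theorem continuousAt_mul_log_zero : ContinuousAt (fun w : ℂ => w * Complex.log w) 0 := by
  have hb : Filter.Tendsto (fun w : ℂ => |‖w‖ * Real.log ‖w‖| + ‖w‖ * π) (nhds 0) (nhds 0) := by
    have : Continuous fun w : ℂ => |‖w‖ * Real.log ‖w‖| + ‖w‖ * π :=
      (continuous_norm.mul_log).abs.add (continuous_norm.mul_const _)
    simpa using this.tendsto 0
  rw [ContinuousAt, zero_mul]
  refine squeeze_zero_norm (fun w => ?_) hb
  rw [norm_mul, abs_mul, abs_norm, ← mul_add]
  refine mul_le_mul_of_nonneg_left ?_ (norm_nonneg w)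
  refine (Complex.norm_le_abs_re_add_abs_im _).trans ?_
  rw [Complex.log_re, Complex.log_im]
  exact add_le_add_right (Complex.abs_arg_le_pi w) _

/-- Cauchy's formula at `w₀ = 1 / m`. The point `w = 0`, where `log` is singular, lies on the
circle, so the continuous-up-to-the-boundary version is used. -/
theorem circleIntegral_residue {m : ℝ} (hm : 1 < m) :
    ∮ w in C(1 / 2, 1 / 2), w * (1 - w) / ((m - Real.log m : ℝ) * w - 1 - w * Complex.log w)
      = 2 * π * Complex.I * (m : ℂ)⁻¹ ^ 2 := by
  set s : ℂ := ((m - Real.log m : ℝ) : ℂ) with hs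
  have hm0 : 0 < m := one_pos.trans hm
  have hmC : (m : ℂ) ≠ 0 := by exact_mod_cast hm0.ne'
  set w₀ : ℂ := (m : ℂ)⁻¹ with hw₀
  have hw₀ne : w₀ ≠ 0 := inv_ne_zero hmC
  have hlog₀ : Complex.log w₀ = -(Real.log m : ℝ) := by
    rw [hw₀, Complex.log_inv, Complex.ofReal_log hm0.le]
    rw [Complex.arg_ofReal_of_nonneg hm0.le]; exact pi_ne_zero.symm
  set N : ℂ → ℂ := fun w => s * w - 1 - w * Complex.log w with hN
  have hN₀ : N w₀ = 0 := by
    simp only [hN, hlog₀, hs]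
    push_cast
    have : (m : ℂ) * w₀ = 1 := mul_inv_cancel₀ hmC
    linear_combination this
  have hre {w : ℂ} (hw : w ∈ Metric.closedBall (1 / 2 : ℂ) (1 / 2)) : ‖w‖ ^ 2 ≤ w.re := by
    rw [Metric.mem_closedBall, dist_eq_norm] at hw
    have h1 : ‖w - 1 / 2‖ ^ 2 ≤ (1 / 2) ^ 2 := by gcongr
    rw [← Complex.normSq_eq_norm_sq, Complex.normSq_apply] at h1 ⊢
    simp at h1
    nlinarith
  have hslit {w : ℂ} (hw : w ∈ Metric.closedBall (1 / 2 : ℂ) (1 / 2)) (h0 : w ≠ 0) :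
      w ∈ Complex.slitPlane := by
    left
    have := hre hw
    have := norm_pos_iff.mpr h0
    exact (by positivity : 0 < ‖w‖ ^ 2).trans_le (hre hw)
  have hball : w₀ ∈ Metric.ball (1 / 2 : ℂ) (1 / 2) := by
    have : w₀ - 1 / 2 = ((m⁻¹ - 1 / 2 : ℝ) : ℂ) := by rw [hw₀]; push_cast; rfl
    rw [Metric.mem_ball, dist_eq_norm, this, Complex.norm_real, norm_eq_abs, abs_lt]
    have := inv_pos.mpr hm0
    have := inv_lt_one_of_one_lt₀ hm
    constructor <;> linarith
  have hball_ne {w : ℂ} (hw : w ∈ Metric.ball (1 / 2 : ℂ) (1 / 2)) : w ≠ 0 := by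
    rintro rfl
    rw [Metric.mem_ball, dist_eq_norm] at hw
    norm_num at hw
  have hNd {w : ℂ} (hw : w ∈ Complex.slitPlane) :
      HasDerivAt N (s - Complex.log w - 1) w := by
    have hw0 := Complex.slitPlane_ne_zero hw
    have h1 := ((hasDerivAt_id w).const_mul s).sub_const 1
    have h2 := (hasDerivAt_id w).mul (Complex.hasDerivAt_log hw)
    refine (h1.sub h2).congr_deriv ?_
    simp only [id, mul_inv_cancel₀ hw0]
    ring
  have hNball : DifferentiableOn ℂ N (Metric.ball (1 / 2) (1 / 2)) := fun w hw =>
    (hNd (hslit (Metric.ball_subset_closedBall hw) (hball_ne hw))).differentiableAt.differentiableWithinAt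
  have hNcont : ContinuousOn N (Metric.closedBall (1 / 2) (1 / 2)) := by
    refine ContinuousOn.sub (by fun_prop) fun w hw => ContinuousAt.continuousWithinAt ?_
    rcases eq_or_ne w 0 with rfl | h0
    · exact continuousAt_mul_log_zero
    · exact continuousAt_id.mul (continuousAt_clog (hslit hw h0))
  -- `N w = (w - w₀) Q w` with `Q` zero-free on the closed disc.
  set Q : ℂ → ℂ := dslope N w₀ with hQ
  have hnhds : Metric.closedBall (1 / 2 : ℂ) (1 / 2) ∈ nhds w₀ :=
    Metric.closedBall_mem_nhds_of_mem hball
  have hslit₀ := hslit (Metric.ball_subset_closedBall hball) hw₀ne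
  have hQcont : ContinuousOn Q (Metric.closedBall (1 / 2) (1 / 2)) :=
    (continuousOn_dslope hnhds).mpr ⟨hNcont, (hNd hslit₀).differentiableAt⟩
  have hQdiff : DifferentiableOn ℂ Q (Metric.ball (1 / 2) (1 / 2)) :=
    (Complex.differentiableOn_dslope (Metric.isOpen_ball.mem_nhds hball)).mpr hNball
  have hQN (w : ℂ) : (w - w₀) * Q w = N w := by
    have := sub_smul_dslope N w₀ w
    rwa [hN₀, sub_zero] at this
  have hQ₀ : Q w₀ = m - 1 := by
    rw [hQ, dslope_same, (hNd hslit₀).deriv, hlog₀, hs]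
    push_cast; ring
  have hQne : ∀ w ∈ Metric.closedBall (1 / 2 : ℂ) (1 / 2), Q w ≠ 0 := by
    intro w hw h0
    have hNw : N w = 0 := by rw [← hQN, h0, mul_zero]
    have hwne : w ≠ 0 := by
      rintro rfl
      simp [hN] at hNw
    have hz : w⁻¹ = m := by
      refine eq_of_sub_log_eq hm ?_ ?_
      · rw [Complex.inv_re, Complex.normSq_eq_norm_sq, one_le_div (by positivity)]
        exact hre hw
      · rw [Complex.log_inv _ (Complex.slitPlane_arg_ne_pi (hslit hw hwne)),
          ← Complex.ofReal_log hm0.le]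
        simp only [hN, hs] at hNw
        push_cast at hNw
        field_simp
        linear_combination -hNw
    have hww : w = w₀ := by rw [hw₀, ← hz, inv_inv]
    rw [hww, hQ₀, sub_eq_zero] at h0
    exact hm.ne' (by exact_mod_cast h0)
  have hcauchy := Complex.circleIntegral_sub_inv_smul_of_differentiable_on_off_countable
    (f := fun w => w * (1 - w) / Q w) countable_empty hball
    (ContinuousOn.div (by fun_prop) hQcont hQne) (fun w hw => ?_)
  · have hval : w₀ * (1 - w₀) / Q w₀ = w₀ ^ 2 := by
      have h1 : (m : ℂ) - 1 ≠ 0 := sub_ne_zero.mpr (by exact_mod_cast hm.ne')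
      rw [hQ₀, hw₀]
      field_simp
    rw [hval, smul_eq_mul] at hcauchy
    rw [← hcauchy]
    refine circleIntegral.integral_congr (by norm_num) fun w hw => ?_
    change w * (1 - w) / N w = _
    rw [← hQN, smul_eq_mul, div_mul_eq_div_div_swap, div_eq_inv_mul _ (w - w₀)]
  · rw [sdiff_empty] at hw
    refine DifferentiableAt.div (by fun_prop) (hQdiff.differentiableAt (Metric.isOpen_ball.mem_nhds hw))
      (hQne w (Metric.ball_subset_closedBall hw))

/-! ### The mass of the cascade density -/

/-- The Laplace transform of `h(t) = t^{t+1} / Γ(t+2) - t^{t+2} / Γ(t+3)` at `s = m - log m`. -/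
theorem laplace_eq {m : ℝ} (hm : 1 < m) :
    ∫ t in Ioi (0 : ℝ), Real.exp (-(m - Real.log m) * t) * (t ^ (t + 1) / Real.Gamma (t + 2)
        - t ^ (t + 2) / Real.Gamma (t + 3)) = m⁻¹ ^ 2 := by
  have hs : 1 < m - Real.log m := by
    have := log_lt_sub_one_of_pos (one_pos.trans hm) hm.ne'
    linarith
  have hpi : (2 * π * Complex.I : ℂ) ≠ 0 := Complex.two_pi_I_ne_zero
  have h1 := laplace_eq_line_integral hs
  have h2 := line_integral_eq_circleIntegral fun w =>
    w * (1 - w) / ((m - Real.log m : ℝ) * w - 1 - w * Complex.log w)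
  rw [circleIntegral_residue hm, inv_mul_cancel_left₀ hpi] at h2
  rw [integral_complex_ofReal] at h1
  have h3 : ((m⁻¹ ^ 2 : ℝ) : ℂ) = (m : ℂ)⁻¹ ^ 2 := by push_cast; rfl
  apply Complex.ofReal_injective
  rw [h1, h3, ← h2]
  refine integral_congr_ae (Filter.Eventually.of_forall fun ξ => ?_)
  simp only
  have hz := vline_ne_zero ξ
  rw [Complex.log_inv _ (Complex.slitPlane_arg_ne_pi (vline_mem ξ)),
    show vline ξ ^ (-2 : ℂ) = (vline ξ)⁻¹ ^ 2 by
      rw [Complex.cpow_neg, ← Complex.cpow_natCast, Complex.inv_cpow _ _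
        (Complex.slitPlane_arg_ne_pi (vline_mem ξ))]; norm_num]
  have hden : ((m - Real.log m : ℝ) : ℂ) * (vline ξ)⁻¹ - 1 - (vline ξ)⁻¹ * -Complex.log (vline ξ)
      = (vline ξ)⁻¹ * ((m - Real.log m : ℝ) - vline ξ + Complex.log (vline ξ)) := by
    field_simp
    ring
  rw [hden, mul_div_mul_left _ _ (inv_ne_zero hz), mul_div_assoc]

/-- The density in the variable `t = 2 (x - 1)`; uses
`t^{t+1} / Γ(t+2) - t^{t+2} / Γ(t+3) = 2 t^{t+1} / ((t+2) Γ(t+2))`. -/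
theorem cascadeDensity_comp {μ t : ℝ} (hμ : 0 < μ) (ht : 0 < t) :
    cascadeDensity (1 / (2 * μ)) (1 + t / 2) = 2 * μ ^ 2 * (Real.exp (-(μ - Real.log μ) * t) *
      (t ^ (t + 1) / Real.Gamma (t + 2) - t ^ (t + 2) / Real.Gamma (t + 3))) := by
  have hΓ : Real.Gamma (t + 2) ≠ 0 := (Real.Gamma_pos_of_pos (by linarith)).ne'
  have hΓ3 : Real.Gamma (t + 3) = (t + 2) * Real.Gamma (t + 2) := by
    rw [← Real.Gamma_add_one (by linarith)]; ring_nf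
  have hexp : Real.exp (-(1 / (1 / (2 * μ)) + 2 * Real.log (1 / (2 * μ))) * (1 + t / 2)
      + 1 / (1 / (2 * μ))) = Real.exp (-(μ - Real.log μ) * t) * μ ^ 2 * 2 ^ (t + 2) := by
    rw [← Real.exp_log (pow_pos hμ 2), rpow_def_of_pos two_pos, ← Real.exp_add, ← Real.exp_add,
      Real.log_pow, one_div_one_div, one_div, Real.log_inv, Real.log_mul two_ne_zero hμ.ne']
    congr 1; push_cast; ring
  have h2 : (2 : ℝ) ^ (t + 2) = 2 * 2 ^ (t + 1) := by
    rw [show t + 2 = t + 1 + 1 by ring, rpow_add_one two_ne_zero]; ring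
  have h3 : t ^ (t + 2) = t * t ^ (t + 1) := by
    rw [show t + 2 = t + 1 + 1 by ring, rpow_add_one ht.ne']; ring
  rw [cascadeDensity, hexp, hΓ3, show 2 * (1 + t / 2) = t + 2 by ring,
    show 1 + t / 2 - 1 = t / 2 by ring, show t + 2 - 1 = t + 1 by ring,
    div_rpow ht.le zero_le_two, h2, h3]
  have : (2 : ℝ) ^ (t + 1) ≠ 0 := (rpow_pos_of_pos two_pos _).ne'
  have : t + 2 ≠ 0 := by linarith
  have : 1 + t / 2 ≠ 0 := by linarith
  field_simp
  ring

/-- For `p > 1/2`, `∫₁^∞ g(x) dx = e^{χ(p)}` where `χ(p) = 2 W₋₁(−e^{−1/(2p)}/(2p)) + 1/p`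
and `W₋₁` is the lower real branch of the Lambert W function, characterized by
`w ≤ −1` and `w e^w = −e^{−1/(2p)}/(2p)`. -/
theorem cascade_density_mass_supercritical (p : ℝ) (hp : 1/2 < p) (w : ℝ)
    (hw1 : w ≤ -1) (hw : w * Real.exp w = -(Real.exp (-(1 / (2 * p))) / (2 * p))) :
    (∫ x in Set.Ioi (1:ℝ), cascadeDensity p x) = Real.exp (2 * w + 1 / p) := by
  have hp0 : 0 < p := by linarith
  obtain ⟨μ, hμ⟩ : ∃ μ, μ = 1 / (2 * p) := ⟨_, rfl⟩
  have hμ0 : 0 < μ := by rw [hμ]; positivity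
  have hμ1 : μ < 1 := by rw [hμ, div_lt_one (by positivity)]; linarith
  obtain ⟨m, rfl⟩ : ∃ m, w = -m := ⟨-w, (neg_neg w).symm⟩
  have hm0 : 0 < m := by linarith
  have hp' : p = 1 / (2 * μ) := by rw [hμ]; field_simp
  have hmμ : m * Real.exp (-m) = μ * Real.exp (-μ) := by
    rw [← hμ, div_eq_mul_one_div, ← hμ] at hw
    linarith
  have hlog : m - Real.log m = μ - Real.log μ := by
    have := congrArg Real.log hmμ
    rw [Real.log_mul hm0.ne' (Real.exp_ne_zero _), Real.log_mul hμ0.ne' (Real.exp_ne_zero _),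
      Real.log_exp, Real.log_exp] at this
    linarith
  -- `m = 1` would force `μ - log μ = 1`, i.e. `μ = 1`, which is the critical case `p = 1/2`.
  have hm1 : 1 < m := by
    refine lt_of_le_of_ne (by linarith) fun h => ?_
    have := log_lt_sub_one_of_pos hμ0 hμ1.ne
    rw [← h, Real.log_one] at hlog
    linarith
  have himage : (fun t : ℝ => 1 + t / 2) '' Ioi 0 = Ioi 1 := by
    ext x
    simp only [mem_image, mem_Ioi]
    exact ⟨fun ⟨t, ht, h⟩ => by linarith, fun h => ⟨2 * (x - 1), by linarith, by ring⟩⟩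
  rw [← himage, integral_image_eq_integral_abs_deriv_smul (f := fun t : ℝ => 1 + t / 2)
    (f' := fun _ => 1 / 2) measurableSet_Ioi
    (fun t _ => (((hasDerivAt_id t).div_const 2).const_add 1).hasDerivWithinAt)
    (fun a _ b _ h => by simp only at h; linarith)]
  have hcongr : ∀ t ∈ Ioi (0 : ℝ), |(1 / 2 : ℝ)| • cascadeDensity p (1 + t / 2)
      = μ ^ 2 * (Real.exp (-(m - Real.log m) * t) *
      (t ^ (t + 1) / Real.Gamma (t + 2) - t ^ (t + 2) / Real.Gamma (t + 3))) := by
    intro t ht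
    rw [hp', cascadeDensity_comp hμ0 ht, hlog, abs_of_pos (by norm_num), smul_eq_mul]
    ring
  rw [setIntegral_congr_fun measurableSet_Ioi hcongr, integral_const_mul, laplace_eq hm1]
  have hratio : Real.exp (μ - m) = μ * m⁻¹ := by
    rw [sub_eq_add_neg, Real.exp_add, ← mul_right_inj' hm0.ne']
    have : Real.exp μ * Real.exp (-μ) = 1 := by rw [← Real.exp_add]; simp
    rw [mul_left_comm, hmμ, mul_left_comm, this]
    field_simp
  have : 2 * -m + 1 / p = (2 : ℕ) * (μ - m) := by rw [hp']; push_cast; field_simp; ring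
  rw [this, Real.exp_nat_mul, hratio, mul_pow]
end
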